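/- Every subcentral idempotent of an inverse monoid S with zero is anti-abnormal, i.e. its Green R-class contains exactly one pre-idempotent (namely the idempotent itself). -/

import Mathlib

/-- An inverse monoid: a monoid in which every element `a` has an inverse `a⁻¹`
satisfying `a * a⁻¹ * a = a` and `a⁻¹ * a * a⁻¹ = a⁻¹`, and this inverse is unique. -/
class InverseMonoid (S : Type*) extends Monoid S, Inv S where
  mul_inv_mul : ∀ a : S, a * a⁻¹ * a = a
  inv_mul_inv : ∀ a : S, a⁻¹ * a * a⁻¹ = a⁻¹
  inv_unique : ∀ a b : S, a * b * a = a → b * a * b = b → b = a⁻¹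

/-- An inverse monoid with a (two-sided absorbing) zero element. -/
class InverseMonoidWithZero (S : Type*) extends InverseMonoid S, Zero S where
  zero_mul : ∀ a : S, 0 * a = 0
  mul_zero : ∀ a : S, a * 0 = 0

/-- The natural partial order on an inverse monoid: `a ≤ b` iff `a = e * b`
for some idempotent `e`. -/
def NatLe {S : Type*} [Monoid S] (a b : S) : Prop :=
  ∃ e : S, IsIdempotentElem e ∧ a = e * b

/-- The filter `e↑ = {s | e ≤ s}` generated by `e`. -/
def upfilter {S : Type*} [Monoid S] (e : S) : Set S := {s | NatLe e s}

/-- `c` is central in (a subset) `T`: it belongs to `T` and commutes with all elements of `T`. -/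
def CentralIn {S : Type*} [Mul S] (T : Set S) (c : S) : Prop :=
  c ∈ T ∧ ∀ s ∈ T, c * s = s * c

/-- A monoid is factorizable if every element is a product of an idempotent and a unit. -/
def Factorizable (S : Type*) [Monoid S] : Prop :=
  ∀ s : S, ∃ e g : S, IsIdempotentElem e ∧ IsUnit g ∧ s = e * g

/-- The natural connection `θ`: for an (idempotent) `e`, the subgroup
`eθ = {g ∈ G : e * g = e}` of the group of units. -/
def natconn {S : Type*} [Monoid S] (e : S) : Subgroup Sˣ where
  carrier := {g : Sˣ | e * (g : S) = e}
  one_mem' := by simp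
  mul_mem' := by
    intro a b ha hb
    simp only [Set.mem_setOf_eq, Units.val_mul] at *
    rw [← mul_assoc, ha, hb]
  inv_mem' := by
    intro a ha
    simp only [Set.mem_setOf_eq] at *
    nth_rewrite 1 [← ha]
    rw [mul_assoc, ← Units.val_mul, mul_inv_cancel, Units.val_one, mul_one]

/-- The natural connection is a dual isomorphism from the idempotents onto a
sublattice of the lattice of subgroups of the group of units: it is injective on
idempotents, order-reversing in both directions, and its image is closed under
joins and meets of subgroups. -/
def NatconnDualIso (S : Type*) [Monoid S] : Prop :=
  (∀ e f : S, IsIdempotentElem e → IsIdempotentElem f → natconn e = natconn f → e = f) ∧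
  (∀ e f : S, IsIdempotentElem e → IsIdempotentElem f →
    (NatLe e f ↔ natconn f ≤ natconn e)) ∧
  (∀ e f : S, IsIdempotentElem e → IsIdempotentElem f →
    (∃ h : S, IsIdempotentElem h ∧ natconn h = natconn e ⊔ natconn f) ∧
    (∃ h : S, IsIdempotentElem h ∧ natconn h = natconn e ⊓ natconn f))

/-- `j` is the join (least upper bound) of `e` and `f` with respect to the natural order. -/
def IsNatJoin {S : Type*} [Monoid S] (e f j : S) : Prop :=
  NatLe e j ∧ NatLe f j ∧ ∀ x : S, NatLe e x → NatLe f x → NatLe j x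

/-- `F_{e,f} = f · e↑`. -/
def Fef {S : Type*} [Monoid S] (e f : S) : Set S := (f * ·) '' upfilter e

/-- `UF_{e,f}`: the group of units of the monoid `F_{e,f}` (whose identity is `f`). -/
def UFef {S : Type*} [Monoid S] (e f : S) : Set S :=
  {x ∈ Fef e f | ∃ y ∈ Fef e f, x * y = f ∧ y * x = f}

/-- The centre of a subset `T`. -/
def ZIn {S : Type*} [Mul S] (T : Set S) : Set S := {x ∈ T | ∀ y ∈ T, x * y = y * x}

/-- Two subsets are isomorphic as semigroups (with the induced multiplication). -/
def SubIso {S : Type*} [Mul S] (A B : Set S) : Prop :=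
  ∃ φ : S → S, Set.BijOn φ A B ∧ ∀ a ∈ A, ∀ b ∈ A, φ (a * b) = φ a * φ b

/-- A subcentral idempotent series between `0` and `a`. -/
def IsSubcentralSeriesBetween {S : Type*} [Monoid S] [Zero S] (n : ℕ) (c : ℕ → S) (a : S) :
    Prop :=
  c 0 = 0 ∧ c n = a ∧ (∀ i ≤ n, IsIdempotentElem (c i)) ∧
    ∀ i < n, CentralIn (upfilter (c i)) (c (i + 1))

/-- A subcentral idempotent series of `S` (between `0` and `1`). -/
def IsSubcentralSeries {S : Type*} [Monoid S] [Zero S] (n : ℕ) (c : ℕ → S) : Prop :=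
  IsSubcentralSeriesBetween n c 1

/-- A central idempotent series of `S`. -/
def IsCentralSeries {S : Type*} [Monoid S] [Zero S] (n : ℕ) (c : ℕ → S) : Prop :=
  c 0 = 0 ∧ c n = 1 ∧ (∀ i ≤ n, IsIdempotentElem (c i)) ∧
    (∀ i < n, NatLe (c i) (c (i + 1))) ∧
    ∀ i < n, CentralIn Set.univ (c (i + 1))

/-- A subcentral idempotent: one occurring in some subcentral idempotent series of `S`. -/
def IsSubcentralIdem {S : Type*} [Monoid S] [Zero S] (e : S) : Prop :=
  ∃ (n : ℕ) (c : ℕ → S), IsSubcentralSeries n c ∧ ∃ i ≤ n, c i = e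

/-- A `G`-nilpotent series: a chain of central idempotents from `0` to `1` with
`F_{eᵢ,eᵢ₊₁} ⊆ Z(F_{0,eᵢ₊₁})`. -/
def GNilpotentSeries {S : Type*} [Monoid S] [Zero S] (n : ℕ) (c : ℕ → S) : Prop :=
  c 0 = 0 ∧ c n = 1 ∧ (∀ i ≤ n, IsIdempotentElem (c i) ∧ CentralIn Set.univ (c i)) ∧
    (∀ i < n, NatLe (c i) (c (i + 1))) ∧
    ∀ i < n, Fef (c i) (c (i + 1)) ⊆ ZIn (Fef 0 (c (i + 1)))

/-- A `G`-solvable series: a chain of central idempotents from `0` to `1` with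
each `F_{eᵢ,eᵢ₊₁}` commutative. -/
def GSolvableSeries {S : Type*} [Monoid S] [Zero S] (n : ℕ) (c : ℕ → S) : Prop :=
  c 0 = 0 ∧ c n = 1 ∧ (∀ i ≤ n, IsIdempotentElem (c i) ∧ CentralIn Set.univ (c i)) ∧
    (∀ i < n, NatLe (c i) (c (i + 1))) ∧
    ∀ i < n, ∀ x ∈ Fef (c i) (c (i + 1)), ∀ y ∈ Fef (c i) (c (i + 1)), x * y = y * x

/-- `S` is `G`-nilpotent. -/
def GNilpotent (S : Type*) [Monoid S] [Zero S] : Prop :=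
  ∃ (n : ℕ) (c : ℕ → S), GNilpotentSeries n c

/-- `S` is `G`-solvable. -/
def GSolvable (S : Type*) [Monoid S] [Zero S] : Prop :=
  ∃ (n : ℕ) (c : ℕ → S), GSolvableSeries n c

/-- Two idempotent series are isomorphic: same length, and a one-to-one correspondence
between their factors under which corresponding factors are isomorphic. -/
def SeriesIso {S : Type*} [Monoid S] (n : ℕ) (c : ℕ → S) (n' : ℕ) (d : ℕ → S) : Prop :=
  n = n' ∧ ∃ σ : ℕ → ℕ, Set.BijOn σ {i | i < n} {i | i < n'} ∧
    ∀ i < n, SubIso (Fef (c i) (c (i + 1))) (Fef (d (σ i)) (d (σ i + 1)))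

/-- A composition series (for a kind `P` of series): it has no repeated terms, and any
refinement of it (of the same kind) only repeats its terms. -/
def IsCompositionOf {S : Type*} (P : ℕ → (ℕ → S) → Prop) (n : ℕ) (c : ℕ → S) : Prop :=
  P n c ∧ (∀ i ≤ n, ∀ j ≤ n, c i = c j → i = j) ∧
    ∀ (m : ℕ) (d : ℕ → S), P m d → (∀ i ≤ n, ∃ j ≤ m, d j = c i) →
      ∀ j ≤ m, ∃ i ≤ n, d j = c i

/-!
Let `a` be a pre-idempotent and `e = a * a⁻¹`. Then `a * e` is idempotent, so for every idempotent
`f ≤ e` commuting with `a` the element `f * a = (a * e) * f` is idempotent. It lies in the `R`-class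
of `f`, whose only idempotent is `f`; hence `f * a = f`, that is, `f ≤ a`. Along a subcentral
series from `0` to `e`, each term below `a` puts `a` in its filter, so that the next term commutes
with `a` and again lies below `a`. Thus the series climbs to `e ≤ a`, and then `a = e * a = e`.
-/

/-- A pre-idempotent: an element whose square lies below it in the natural partial order. -/
def IsPreIdempotent {S : Type*} [Monoid S] (a : S) : Prop := NatLe (a * a) a

theorem NatLe.mul_eq_left {S : Type*} [Monoid S] {a f : S} (h : NatLe a f)
    (hf : IsIdempotentElem f) : a * f = a := by
  obtain ⟨g, -, rfl⟩ := h
  rw [mul_assoc, hf.eq]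

namespace InverseMonoid

variable {S : Type*} [InverseMonoid S] {a b e f : S}

protected theorem inv_inv (a : S) : a⁻¹⁻¹ = a :=
  (inv_unique _ _ (inv_mul_inv a) (mul_inv_mul a)).symm

theorem inv_eq_self_of_isIdempotentElem (he : IsIdempotentElem e) : e⁻¹ = e :=
  (inv_unique e e (by rw [he.eq, he.eq]) (by rw [he.eq, he.eq])).symm

theorem mul_inv_mul_eq_inv_of_isIdempotentElem (he : IsIdempotentElem e)
    (hf : IsIdempotentElem f) : f * (e * f)⁻¹ * e = (e * f)⁻¹ := by
  apply inv_unique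
  · calc e * f * (f * (e * f)⁻¹ * e) * (e * f)
        = e * (f * f) * (e * f)⁻¹ * (e * e * f) := by simp only [mul_assoc]
      _ = e * f := by rw [he.eq, hf.eq, mul_inv_mul]
  · calc f * (e * f)⁻¹ * e * (e * f) * (f * (e * f)⁻¹ * e)
        = f * ((e * f)⁻¹ * (e * e * (f * f)) * (e * f)⁻¹) * e := by simp only [mul_assoc]
      _ = f * (e * f)⁻¹ * e := by rw [he.eq, hf.eq, inv_mul_inv]

theorem isIdempotentElem_mul (he : IsIdempotentElem e) (hf : IsIdempotentElem f) :
    IsIdempotentElem (e * f) := by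
  have hinv : IsIdempotentElem (e * f)⁻¹ := by
    calc (e * f)⁻¹ * (e * f)⁻¹
        = f * (e * f)⁻¹ * e * (f * (e * f)⁻¹ * e) := by
          rw [mul_inv_mul_eq_inv_of_isIdempotentElem he hf]
      _ = f * ((e * f)⁻¹ * (e * f) * (e * f)⁻¹) * e := by simp only [mul_assoc]
      _ = (e * f)⁻¹ := by rw [inv_mul_inv, mul_inv_mul_eq_inv_of_isIdempotentElem he hf]
  rwa [← InverseMonoid.inv_inv (e * f), inv_eq_self_of_isIdempotentElem hinv]

theorem commute_of_isIdempotentElem (he : IsIdempotentElem e) (hf : IsIdempotentElem f) :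
    Commute e f := by
  have hef := isIdempotentElem_mul he hf
  calc e * f = (e * f)⁻¹ := (inv_eq_self_of_isIdempotentElem hef).symm
    _ = f * (e * f)⁻¹ * e := (mul_inv_mul_eq_inv_of_isIdempotentElem he hf).symm
    _ = f * (e * f) * e := by rw [inv_eq_self_of_isIdempotentElem hef]
    _ = f * e * (f * e) := by simp only [mul_assoc]
    _ = f * e := isIdempotentElem_mul hf he

theorem isIdempotentElem_mul_inv (a : S) : IsIdempotentElem (a * a⁻¹) := by
  rw [IsIdempotentElem, ← mul_assoc, mul_inv_mul]

theorem eq_of_isIdempotentElem_of_mul_eq (he : IsIdempotentElem e) (hf : IsIdempotentElem f)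
    (hfe : f * e = e) (heb : e * b = f) : e = f := by
  calc e = f * e := hfe.symm
    _ = e * f := commute_of_isIdempotentElem hf he
    _ = e * e * b := by rw [← heb, mul_assoc]
    _ = f := by rw [he.eq, heb]

end InverseMonoid

namespace IsPreIdempotent

open InverseMonoid

variable {S : Type*} [InverseMonoid S] {a f : S}

theorem isIdempotentElem_mul_mul_inv (ha : IsPreIdempotent a) :
    IsIdempotentElem (a * (a * a⁻¹)) := by
  obtain ⟨h, hh, hah⟩ := ha
  rw [← mul_assoc, hah, mul_assoc]
  exact isIdempotentElem_mul hh (isIdempotentElem_mul_inv a)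

theorem mul_eq_left_of_commute (ha : IsPreIdempotent a) (hf : IsIdempotentElem f)
    (hle : f * (a * a⁻¹) = f) (hfa : Commute f a) : f * a = f := by
  have hfa_eq : f * a = a * (a * a⁻¹) * f := by
    calc f * a = a * f := hfa
      _ = a * (f * (a * a⁻¹)) := by rw [hle]
      _ = a * (a * a⁻¹ * f) := by
        rw [(commute_of_isIdempotentElem hf (isIdempotentElem_mul_inv a)).eq]
      _ = a * (a * a⁻¹) * f := (mul_assoc _ _ _).symm
  have hfa_idem : IsIdempotentElem (f * a) := by
    rw [hfa_eq]
    exact isIdempotentElem_mul ha.isIdempotentElem_mul_mul_inv hf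
  exact eq_of_isIdempotentElem_of_mul_eq hfa_idem hf (by rw [← mul_assoc, hf.eq])
    (by rw [mul_assoc, hle])

end IsPreIdempotent

namespace IsSubcentralSeriesBetween

section Monoid

variable {S : Type*} [Monoid S] [Zero S] {n i j : ℕ} {c : ℕ → S} {e : S}

theorem take (hc : IsSubcentralSeriesBetween n c e) (hi : i ≤ n) :
    IsSubcentralSeriesBetween i c (c i) :=
  ⟨hc.1, rfl, fun j hj => hc.2.2.1 j (hj.trans hi), fun j hj => hc.2.2.2 j (hj.trans_le hi)⟩

theorem mul_eq_left (hc : IsSubcentralSeriesBetween n c e) (hj : j ≤ n) : c j * e = c j := by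
  obtain ⟨-, rfl, hidem, hcentral⟩ := hc
  induction hj using Nat.decreasingInduction with
  | self => exact hidem n le_rfl
  | of_succ j hj ih =>
    have hstep : c j * c (j + 1) = c j :=
      NatLe.mul_eq_left (hcentral j hj).1 (hidem (j + 1) hj)
    calc c j * c n = c j * (c (j + 1) * c n) := by rw [← mul_assoc, hstep]
      _ = c j := by rw [ih, hstep]

end Monoid

theorem mul_eq_left_of_isPreIdempotent {S : Type*} [InverseMonoidWithZero S] {n j : ℕ}
    {c : ℕ → S} {a : S} (hc : IsSubcentralSeriesBetween n c (a * a⁻¹)) (ha : IsPreIdempotent a)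
    (hj : j ≤ n) : c j * a = c j := by
  have ⟨hzero, _, hidem, hcentral⟩ := hc
  induction j with
  | zero => rw [hzero, InverseMonoidWithZero.zero_mul]
  | succ j ih =>
    have ha_mem : a ∈ upfilter (c j) := ⟨c j, hidem j (by lia), (ih (by lia)).symm⟩
    exact ha.mul_eq_left_of_commute (hidem _ hj) (hc.mul_eq_left hj) ((hcentral j hj).2 a ha_mem)

end IsSubcentralSeriesBetween

/-- STATEMENT 18: Every subcentral idempotent `e` of an inverse monoid with zero is
anti-abnormal: its Green `R`-class `R_e = {a : a a⁻¹ = e}` contains exactly one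
pre-idempotent (an element `a` with `a² ≤ a`), namely `e` itself. -/
theorem stmt_18 {S : Type*} [InverseMonoidWithZero S] (e : S) (hsc : IsSubcentralIdem e) :
    (e * e⁻¹ = e ∧ NatLe (e * e) e) ∧
    ∀ a : S, a * a⁻¹ = e → NatLe (a * a) a → a = e := by
  obtain ⟨n, c, hc, i, hi, rfl⟩ := hsc
  have hidem : IsIdempotentElem (c i) := hc.2.2.1 i hi
  refine ⟨⟨?_, c i, hidem, rfl⟩, fun a haR ha => ?_⟩
  · rw [InverseMonoid.inv_eq_self_of_isIdempotentElem hidem, hidem.eq]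
  · have hseries : IsSubcentralSeriesBetween i c (a * a⁻¹) := haR ▸ hc.take hi
    calc a = a * a⁻¹ * a := (InverseMonoid.mul_inv_mul a).symm
      _ = c i * a := by rw [haR]
      _ = c i := hseries.mul_eq_left_of_isPreIdempotent ha le_rfl
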